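/- arXiv:math/0504061 — 2 statements merged into one kernel-verified Lean document; each statement's English description precedes it below -/
import Mathlib

section
/- Let (u_ε) be a c-bounded moderate net of smooth maps ℝ^m → ℝ^n and let (v_ε) be a moderate net of smooth functions ℝ^n → ℝ. Then the net of compositions (v_ε ∘ u_ε) is a moderate net of smooth functions ℝ^m → ℝ. -/
/-!
The composition is estimated pointwise by the Faà di Bruno bound
`norm_iteratedFDeriv_comp_le`: if the derivatives of `v ε` up to order `k` at `u ε x` are at most
`A` and the derivatives of `u ε` of order `1 ≤ i ≤ k` at `x` are at most `B ^ i`, then the `k`-th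
derivative of the composition at `x` is at most `k ! * A * B ^ k`. For `x` in a compact set `K`,
c-boundedness keeps `u ε x` in a fixed compact set `K'`, so moderateness of `v` on `K'` supplies
`A = C / ε ^ p`, while moderateness of `u` on `K` supplies `B = D / ε ^ q` with `D ≥ 1`; since then
`B ≥ 1`, a bound by `B` is also a bound by `B ^ i`. The resulting bound is
`(k ! * C * D ^ k) / ε ^ (p + q * k)`. The constants can be chosen uniformly in the finitely many
orders of differentiation and components by `exists_common_bound`.
-/

open Topology Filter Set

/-- A net of smooth real-valued functions on a normed space is moderate: on each compact
set, every iterated derivative grows at most like some negative power of `ε`. -/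
def ModerateF {E : Type*} [NormedAddCommGroup E] [NormedSpace ℝ E]
    (u : ℝ → E → ℝ) : Prop :=
  ∀ K : Set E, IsCompact K → ∀ k : ℕ, ∃ p : ℕ, ∃ C > (0:ℝ), ∃ ε₀ > (0:ℝ),
    ∀ ε : ℝ, 0 < ε → ε < ε₀ → ∀ x ∈ K, ‖iteratedFDeriv ℝ k (u ε) x‖ ≤ C / ε ^ p

/-- A net of maps into `ℝ^n` is moderate if each component is moderate. -/
def ModerateV {E : Type*} [NormedAddCommGroup E] [NormedSpace ℝ E] {n : ℕ}
    (u : ℝ → E → (Fin n → ℝ)) : Prop :=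
  ∀ i : Fin n, ModerateF (fun ε x => u ε x i)

/-- A net of maps is c-bounded: each compact set is mapped into a fixed compact set
for small `ε`. -/
def CBoundedMap {X Y : Type*} [TopologicalSpace X] [TopologicalSpace Y]
    (u : ℝ → X → Y) : Prop :=
  ∀ K : Set X, IsCompact K → ∃ ε₀ > (0:ℝ), ∃ K' : Set Y, IsCompact K' ∧
    ∀ ε : ℝ, 0 < ε → ε < ε₀ → ∀ x ∈ K, u ε x ∈ K'

/-- Finitely many nets of functions, each bounded on `K` by a negative power of `ε`, satisfy one
common bound `C / ε ^ p` with `C ≥ 1`. -/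
lemma exists_common_bound {ι X : Type*} [Fintype ι] (f : ι → ℝ → X → ℝ) (K : Set X)
    (h : ∀ i, ∃ p : ℕ, ∃ C > (0:ℝ), ∃ ε₀ > (0:ℝ),
      ∀ ε : ℝ, 0 < ε → ε < ε₀ → ∀ x ∈ K, f i ε x ≤ C / ε ^ p) :
    ∃ p : ℕ, ∃ C ≥ (1:ℝ), ∀ᶠ ε in 𝓝[>] (0:ℝ), ∀ i, ∀ x ∈ K, f i ε x ≤ C / ε ^ p := by
  choose p C hC ε₀ hε₀ hb using h
  refine ⟨∑ i, p i, 1 + ∑ i, C i,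
    le_add_of_nonneg_right (Finset.sum_nonneg fun i _ => (hC i).le), ?_⟩
  rw [eventually_all]
  intro i
  filter_upwards [Ioo_mem_nhdsGT (hε₀ i), Ioo_mem_nhdsGT (zero_lt_one (α := ℝ))] with ε h1 h2 x hx
  refine (hb i ε h1.1 h1.2 x hx).trans ?_
  have hsum : C i ≤ ∑ j, C j :=
    Finset.single_le_sum (fun j _ => (hC j).le) (Finset.mem_univ i)
  have hp : p i ≤ ∑ j, p j :=
    Finset.single_le_sum (fun j _ => Nat.zero_le (p j)) (Finset.mem_univ i)
  exact div_le_div₀ (by linarith [hC i]) (by linarith) (pow_pos h1.1 _)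
    (pow_le_pow_of_le_one h1.1.le h2.2.le hp)

/-- With the sup norm on `Fin n → ℝ`, a bound on the derivatives of all components is a bound on
the derivative of the map. -/
lemma norm_iteratedFDeriv_pi_le {E : Type*} [NormedAddCommGroup E] [NormedSpace ℝ E] {n : ℕ}
    {g : E → Fin n → ℝ} (hg : ContDiff ℝ (⊤ : ℕ∞) g) (k : ℕ) (x : E) {B : ℝ} (hB : 0 ≤ B)
    (h : ∀ i, ‖iteratedFDeriv ℝ k (fun y => g y i) x‖ ≤ B) :
    ‖iteratedFDeriv ℝ k g x‖ ≤ B := by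
  refine ContinuousMultilinearMap.opNorm_le_bound hB fun w => ?_
  refine (pi_norm_le_iff_of_nonneg (by positivity)).2 fun i => ?_
  have hcomp := (ContinuousLinearMap.proj (R := ℝ) (φ := fun _ : Fin n => ℝ) i).iteratedFDeriv_comp_left
    (hg.contDiffAt (x := x)) (i := k) (by exact_mod_cast le_top)
  have hw : iteratedFDeriv ℝ k g x w i = iteratedFDeriv ℝ k (fun y => g y i) x w :=
    (congrArg (fun T => T w) hcomp).symm
  rw [hw]
  exact ContinuousMultilinearMap.le_of_opNorm_le (h i) w

/-- the composition of a c-bounded moderate net of smooth maps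
`ℝ^m → ℝ^n` with a moderate net of smooth functions `ℝ^n → ℝ` is a moderate net of
smooth functions `ℝ^m → ℝ`. -/
theorem stmt7 {m n : ℕ}
    (u : ℝ → (Fin m → ℝ) → (Fin n → ℝ))
    (hus : ∀ ε ∈ Set.Ioc (0:ℝ) 1, ContDiff ℝ (⊤ : ℕ∞) (u ε))
    (hucb : CBoundedMap u) (humod : ModerateV u)
    (v : ℝ → (Fin n → ℝ) → ℝ)
    (hvs : ∀ ε ∈ Set.Ioc (0:ℝ) 1, ContDiff ℝ (⊤ : ℕ∞) (v ε))
    (hvmod : ModerateF v) :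
    ModerateF (fun ε x => v ε (u ε x)) := by
  intro K hK k
  obtain ⟨ε₁, hε₁, K', hK', hmaps⟩ := hucb K hK
  obtain ⟨p, C, hC, hv⟩ := exists_common_bound
    (fun (j : Fin (k + 1)) ε y => ‖iteratedFDeriv ℝ j (v ε) y‖) K' fun j => hvmod K' hK' j
  obtain ⟨q, D, hD, hu⟩ := exists_common_bound
    (fun (a : Fin n × Fin (k + 1)) ε x => ‖iteratedFDeriv ℝ a.2 (fun y => u ε y a.1) x‖) K
    fun a => humod a.1 K hK a.2
  have hev : ∀ᶠ ε in 𝓝[>] (0:ℝ), ∀ x ∈ K, ‖iteratedFDeriv ℝ k (fun y => v ε (u ε y)) x‖ ≤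
      (k.factorial * C * D ^ k) / ε ^ (p + q * k) := by
    filter_upwards [hv, hu, Ioo_mem_nhdsGT hε₁, Ioo_mem_nhdsGT (zero_lt_one (α := ℝ))]
      with ε hvε huε hε hε1 x hx
    have hmem : ε ∈ Set.Ioc (0:ℝ) 1 := ⟨hε1.1, hε1.2.le⟩
    have hB : 1 ≤ D / ε ^ q := by
      rw [one_le_div (pow_pos hε.1 q)]
      exact (pow_le_one₀ hε.1.le hε1.2.le).trans hD
    have key := norm_iteratedFDeriv_comp_le (hvs ε hmem) (hus ε hmem) (n := k)
      (by exact_mod_cast le_top) x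
      (C := C / ε ^ p) (D := D / ε ^ q)
      (fun i hi => hvε ⟨i, Nat.lt_succ_of_le hi⟩ _ (hmaps ε hε.1 hε.2 x hx))
      (fun i hi1 hi => (norm_iteratedFDeriv_pi_le (hus ε hmem) i x (zero_le_one.trans hB)
        fun a => huε (a, ⟨i, Nat.lt_succ_of_le hi⟩) x hx).trans
          (le_self_pow₀ hB (Nat.one_le_iff_ne_zero.1 hi1)))
    refine key.trans_eq ?_
    rw [div_pow, ← pow_mul, pow_add]
    ring
  obtain ⟨ε₀, hε₀, h⟩ := (nhdsGT_basis (0:ℝ)).eventually_iff.1 hev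
  exact ⟨p + q * k, k.factorial * C * D ^ k, by positivity, ε₀, hε₀,
    fun ε h0 h1 => h ⟨h0, h1⟩⟩
end

section
/- Let (u_ε) and (u'_ε) be c-bounded moderate nets of smooth maps ℝ^m → ℝ^n with (u_ε − u'_ε) negligible, and let (v_ε), (v'_ε) be moderate nets of smooth functions ℝ^n → ℝ with (v_ε − v'_ε) negligible. Then the net (v_ε ∘ u_ε − v'_ε ∘ u'_ε) is negligible; i.e. composition of Colombeau generalized functions with c-bounded generalized maps is well defined on equivalence classes. -/
/-!
Estimates are phrased with `∀ᶠ ε in 𝓝[>] 0`, where constants can be absorbed into one more power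
of `ε⁻¹`: moderate means `≤ ε⁻¹ ^ p` and negligible means `≤ ε ^ m` for every `m`.

Moderateness of `v ∘ u` follows from the Faà di Bruno bound `norm_iteratedFDeriv_comp_le`:
c-boundedness keeps `u ε x` in one fixed compact set, on which `v` is moderate
(`moderate_comp`). For the values, write
`v (u x) - v' (u' x) = (v (u x) - v (u' x)) + (v - v') (u' x)`.
The second term is negligible because `u'` is c-bounded. The first is estimated by the mean value
inequality on a closed ball containing the values of both `u` and `u'`: the derivative of `v`
costs only a fixed power of `ε⁻¹`, which the negligible factor `u - u'` absorbs.
-/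

open Topology Filter Set

/-- A net of smooth real-valued functions is negligible: it is moderate and its values
are `O(ε^m)` for every `m` uniformly on compact sets. -/
def NegligibleF {E : Type*} [NormedAddCommGroup E] [NormedSpace ℝ E]
    (u : ℝ → E → ℝ) : Prop :=
  ModerateF u ∧ ∀ K : Set E, IsCompact K → ∀ m : ℕ, ∃ C > (0:ℝ), ∃ ε₀ > (0:ℝ),
    ∀ ε : ℝ, 0 < ε → ε < ε₀ → ∀ x ∈ K, |u ε x| ≤ C * ε ^ m

def NegligibleV {E : Type*} [NormedAddCommGroup E] [NormedSpace ℝ E] {n : ℕ}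
    (u : ℝ → E → (Fin n → ℝ)) : Prop :=
  ∀ i : Fin n, NegligibleF (fun ε x => u ε x i)

theorem eventually_pos_iff {P : ℝ → Prop} :
    (∀ᶠ ε in 𝓝[>] (0:ℝ), P ε) ↔ ∃ ε₀ > (0:ℝ), ∀ ε : ℝ, 0 < ε → ε < ε₀ → P ε := by
  rw [Filter.Eventually, mem_nhdsGT_iff_exists_Ioo_subset]
  exact ⟨fun ⟨a, ha, h⟩ => ⟨a, ha, fun ε h0 h1 => h ⟨h0, h1⟩⟩,
    fun ⟨a, ha, h⟩ => ⟨a, ha, fun ε hε => h ε hε.1 hε.2⟩⟩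

theorem eventually_Ioc : ∀ᶠ ε in 𝓝[>] (0:ℝ), ε ∈ Set.Ioc (0:ℝ) 1 :=
  Ioc_mem_nhdsGT one_pos

theorem eventually_le_inv (C : ℝ) : ∀ᶠ ε in 𝓝[>] (0:ℝ), C ≤ ε⁻¹ :=
  tendsto_inv_nhdsGT_zero.eventually_ge_atTop C

theorem inv_pow_mono {ε : ℝ} (h : ε ∈ Set.Ioc (0:ℝ) 1) {p q : ℕ} (hpq : p ≤ q) :
    ε⁻¹ ^ p ≤ ε⁻¹ ^ q :=
  pow_le_pow_right₀ ((one_le_inv₀ h.1).2 h.2) hpq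

section

variable {E : Type*} [NormedAddCommGroup E] [NormedSpace ℝ E]

/-- Moderateness with the multiplicative constant absorbed into the power of `ε⁻¹`. -/
theorem moderateF_iff {u : ℝ → E → ℝ} : ModerateF u ↔ ∀ K : Set E, IsCompact K → ∀ k : ℕ,
    ∃ p : ℕ, ∀ᶠ ε in 𝓝[>] (0:ℝ), ∀ x ∈ K, ‖iteratedFDeriv ℝ k (u ε) x‖ ≤ ε⁻¹ ^ p := by
  refine forall_congr' fun K => forall_congr' fun hK => forall_congr' fun k => ⟨?_, ?_⟩
  · rintro ⟨p, C, -, h⟩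
    refine ⟨p + 1, ?_⟩
    filter_upwards [eventually_pos_iff.2 h, eventually_le_inv C, eventually_Ioc] with ε h1 h2 h3 x hx
    have h0 : (0:ℝ) ≤ ε⁻¹ := inv_nonneg.2 h3.1.le
    calc _ ≤ C / ε ^ p := h1 x hx
      _ = ε⁻¹ ^ p * C := by rw [inv_pow, div_eq_inv_mul]
      _ ≤ ε⁻¹ ^ p * ε⁻¹ := by gcongr
      _ = _ := (pow_succ _ _).symm
  · rintro ⟨p, h⟩
    refine ⟨p, 1, one_pos, ?_⟩
    simpa only [one_div, inv_pow] using eventually_pos_iff.1 h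

/-- The zeroth-order bounds of a negligible net, with the constant absorbed at the price of one
power of `ε`. -/
theorem NegligibleF.eventually_le {u : ℝ → E → ℝ} (hu : NegligibleF u) {K : Set E}
    (hK : IsCompact K) (m : ℕ) : ∀ᶠ ε in 𝓝[>] (0:ℝ), ∀ x ∈ K, |u ε x| ≤ ε ^ m := by
  obtain ⟨C, -, h⟩ := hu.2 K hK (m + 1)
  filter_upwards [eventually_pos_iff.2 h, eventually_le_inv C, eventually_Ioc] with ε h1 h2 h3 x hx
  have h0 := h3.1
  calc _ ≤ C * ε ^ (m + 1) := h1 x hx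
    _ ≤ ε⁻¹ * ε ^ (m + 1) := by gcongr
    _ = ε ^ m := by rw [pow_succ']; field_simp

/-- On a compact set one power of `ε⁻¹` serves for all derivatives of order at most `k`. -/
theorem ModerateF.eventually_le {u : ℝ → E → ℝ} (hu : ModerateF u) {K : Set E}
    (hK : IsCompact K) (k : ℕ) : ∃ p : ℕ, ∀ᶠ ε in 𝓝[>] (0:ℝ), ∀ j ≤ k, ∀ x ∈ K,
      ‖iteratedFDeriv ℝ j (u ε) x‖ ≤ ε⁻¹ ^ p := by
  choose p hp using moderateF_iff.1 hu K hK
  refine ⟨(Finset.range (k + 1)).sup p, ?_⟩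
  filter_upwards [(Finset.range (k + 1)).eventually_all.2 fun j _ => hp j, eventually_Ioc]
    with ε h1 h2 j hj x hx
  have hj' : j ∈ Finset.range (k + 1) := Finset.mem_range.2 (by omega)
  exact (h1 j hj' x hx).trans (inv_pow_mono h2 (Finset.le_sup hj'))

/-- For the sup norm on `ℝ^n`, the derivatives of a map are bounded by those of its components. -/
theorem norm_iteratedFDeriv_le_of_components {n : ℕ} {f : E → Fin n → ℝ}
    (hf : ContDiff ℝ (⊤ : ℕ∞) f) {k : ℕ} {x : E} {C : ℝ} (hC : 0 ≤ C)
    (h : ∀ i, ‖iteratedFDeriv ℝ k (fun y => f y i) x‖ ≤ C) : ‖iteratedFDeriv ℝ k f x‖ ≤ C := by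
  refine ContinuousMultilinearMap.opNorm_le_bound hC fun w => ?_
  rw [pi_norm_le_iff_of_nonneg (by positivity)]
  intro i
  have e := (ContinuousLinearMap.proj (R := ℝ) (φ := fun _ : Fin n => ℝ) i).iteratedFDeriv_comp_left
    (x := x) hf.contDiffAt (i := k) (by exact_mod_cast le_top)
  have e2 : iteratedFDeriv ℝ k f x w i = iteratedFDeriv ℝ k (fun y => f y i) x w :=
    (congrArg (fun T => T w) e).symm
  rw [e2]
  exact ContinuousMultilinearMap.le_of_opNorm_le (h i) w

theorem ModerateV.eventually_le {n : ℕ} {u : ℝ → E → Fin n → ℝ} (hu : ModerateV u)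
    (hs : ∀ ε ∈ Set.Ioc (0:ℝ) 1, ContDiff ℝ (⊤ : ℕ∞) (u ε)) {K : Set E}
    (hK : IsCompact K) (k : ℕ) : ∃ p : ℕ, ∀ᶠ ε in 𝓝[>] (0:ℝ), ∀ j ≤ k, ∀ x ∈ K,
      ‖iteratedFDeriv ℝ j (u ε) x‖ ≤ ε⁻¹ ^ p := by
  choose p hp using fun i => (hu i).eventually_le hK k
  refine ⟨Finset.univ.sup p, ?_⟩
  filter_upwards [eventually_all.2 hp, eventually_Ioc] with ε h1 h2 j hj x hx
  have h0 : (0:ℝ) ≤ ε⁻¹ := inv_nonneg.2 h2.1.le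
  exact norm_iteratedFDeriv_le_of_components (hs ε h2) (by positivity) fun i =>
    (h1 i j hj x hx).trans (inv_pow_mono h2 (Finset.le_sup (Finset.mem_univ i)))

theorem ModerateF.sub {f g : ℝ → E → ℝ} (hf : ModerateF f) (hg : ModerateF g)
    (hfs : ∀ ε ∈ Set.Ioc (0:ℝ) 1, ContDiff ℝ (⊤ : ℕ∞) (f ε))
    (hgs : ∀ ε ∈ Set.Ioc (0:ℝ) 1, ContDiff ℝ (⊤ : ℕ∞) (g ε)) :
    ModerateF (fun ε x => f ε x - g ε x) := by
  rw [moderateF_iff] at *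
  intro K hK k
  obtain ⟨p, hp⟩ := hf K hK k
  obtain ⟨q, hq⟩ := hg K hK k
  refine ⟨max p q + 1, ?_⟩
  filter_upwards [hp, hq, eventually_Ioc, eventually_le_inv 2] with ε h1 h2 h3 h4 x hx
  have h0 : (0:ℝ) ≤ ε⁻¹ := inv_nonneg.2 h3.1.le
  have hk : ((k : ℕ∞) : WithTop ℕ∞) ≤ ((⊤ : ℕ∞) : WithTop ℕ∞) := by exact_mod_cast le_top
  have e : iteratedFDeriv ℝ k (fun y => f ε y - g ε y) x
      = iteratedFDeriv ℝ k (f ε) x - iteratedFDeriv ℝ k (g ε) x :=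
    iteratedFDeriv_sub_apply ((hfs ε h3).of_le hk).contDiffAt ((hgs ε h3).of_le hk).contDiffAt
  rw [e]
  calc _ ≤ _ := norm_sub_le _ _
    _ ≤ ε⁻¹ ^ max p q + ε⁻¹ ^ max p q := add_le_add
        ((h1 x hx).trans (inv_pow_mono h3 (le_max_left _ _)))
        ((h2 x hx).trans (inv_pow_mono h3 (le_max_right _ _)))
    _ = ε⁻¹ ^ max p q * 2 := by ring
    _ ≤ ε⁻¹ ^ max p q * ε⁻¹ := by gcongr
    _ = _ := (pow_succ _ _).symm

theorem moderate_comp {n : ℕ} {u : ℝ → E → Fin n → ℝ} {v : ℝ → (Fin n → ℝ) → ℝ}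
    (hus : ∀ ε ∈ Set.Ioc (0:ℝ) 1, ContDiff ℝ (⊤ : ℕ∞) (u ε))
    (hvs : ∀ ε ∈ Set.Ioc (0:ℝ) 1, ContDiff ℝ (⊤ : ℕ∞) (v ε))
    (hucb : CBoundedMap u) (humod : ModerateV u) (hvmod : ModerateF v) :
    ModerateF (fun ε x => v ε (u ε x)) := by
  rw [moderateF_iff]
  intro K hK k
  obtain ⟨ε₀, hε₀, K', hK', hKK⟩ := hucb K hK
  obtain ⟨p, hp⟩ := hvmod.eventually_le hK' k
  obtain ⟨q, hq⟩ := humod.eventually_le hus hK k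
  refine ⟨1 + p + q * k, ?_⟩
  filter_upwards [hp, hq, eventually_pos_iff.2 ⟨ε₀, hε₀, hKK⟩, eventually_Ioc,
    eventually_le_inv (k.factorial : ℝ)] with ε h1 h2 h3 h4 h5 x hx
  have h0 : (0:ℝ) ≤ ε⁻¹ := inv_nonneg.2 h4.1.le
  have key := norm_iteratedFDeriv_comp_le (hvs ε h4) (hus ε h4) (n := k)
    (by exact_mod_cast le_top) x (C := ε⁻¹ ^ p) (D := ε⁻¹ ^ q)
    (fun i hi => h1 i hi _ (h3 x hx)) fun i hi1 hi => (h2 i hi x hx).trans (by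
      rw [← pow_mul]
      exact inv_pow_mono h4 (Nat.le_mul_of_pos_right q hi1))
  calc _ ≤ _ := key
    _ ≤ ε⁻¹ * ε⁻¹ ^ p * (ε⁻¹ ^ q) ^ k := by gcongr
    _ = _ := by rw [← pow_mul, pow_add, pow_add, pow_one]

end

/-- composition of Colombeau generalized functions with c-bounded
generalized maps is well defined on equivalence classes: if `u - u'` and `v - v'` are
negligible then so is `v ∘ u - v' ∘ u'`. -/
theorem stmt8 {m n : ℕ}
    (u u' : ℝ → (Fin m → ℝ) → (Fin n → ℝ))
    (hus : ∀ ε ∈ Set.Ioc (0:ℝ) 1, ContDiff ℝ (⊤ : ℕ∞) (u ε))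
    (hus' : ∀ ε ∈ Set.Ioc (0:ℝ) 1, ContDiff ℝ (⊤ : ℕ∞) (u' ε))
    (hucb : CBoundedMap u) (hucb' : CBoundedMap u')
    (humod : ModerateV u) (humod' : ModerateV u')
    (huneg : NegligibleV (fun ε x => u ε x - u' ε x))
    (v v' : ℝ → (Fin n → ℝ) → ℝ)
    (hvs : ∀ ε ∈ Set.Ioc (0:ℝ) 1, ContDiff ℝ (⊤ : ℕ∞) (v ε))
    (hvs' : ∀ ε ∈ Set.Ioc (0:ℝ) 1, ContDiff ℝ (⊤ : ℕ∞) (v' ε))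
    (hvmod : ModerateF v) (hvmod' : ModerateF v')
    (hvneg : NegligibleF (fun ε x => v ε x - v' ε x)) :
    NegligibleF (fun ε x => v ε (u ε x) - v' ε (u' ε x)) := by
  refine ⟨(moderate_comp hus hvs hucb humod hvmod).sub (moderate_comp hus' hvs' hucb' humod' hvmod')
    (fun ε h => (hvs ε h).comp (hus ε h)) (fun ε h => (hvs' ε h).comp (hus' ε h)), ?_⟩
  intro K hK l
  obtain ⟨ε₁, hε₁, K₁, hK₁, h₁⟩ := hucb K hK
  obtain ⟨ε₂, hε₂, K₂, hK₂, h₂⟩ := hucb' K hK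
  -- The mean value inequality needs a convex set, hence a ball around both compact sets.
  obtain ⟨R, hR⟩ := (hK₁.union hK₂).isBounded.subset_closedBall 0
  have hB : IsCompact (Metric.closedBall (0 : Fin n → ℝ) R) := isCompact_closedBall 0 R
  obtain ⟨p, hp⟩ := moderateF_iff.1 hvmod _ hB 1
  refine ⟨2, two_pos, eventually_pos_iff.1 ?_⟩
  filter_upwards [hp, eventually_pos_iff.2 ⟨ε₁, hε₁, h₁⟩, eventually_pos_iff.2 ⟨ε₂, hε₂, h₂⟩,
    eventually_Ioc, eventually_all.2 fun i => (huneg i).eventually_le hK (p + l),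
    hvneg.eventually_le hB l] with ε hv hu hu' hε hd hvd x hx
  have h0 := hε.1
  have m1 := hR (Or.inl (hu x hx))
  have m2 := hR (Or.inr (hu' x hx))
  have hdist : ‖u ε x - u' ε x‖ ≤ ε ^ (p + l) :=
    (pi_norm_le_iff_of_nonneg (by positivity)).2 fun i => hd i x hx
  have hmv : ‖v ε (u ε x) - v ε (u' ε x)‖ ≤ ε⁻¹ ^ p * ‖u ε x - u' ε x‖ :=
    (convex_closedBall (0 : Fin n → ℝ) R).norm_image_sub_le_of_norm_fderiv_le (𝕜 := ℝ)
      (fun y _ => (hvs ε hε).differentiable (by simp) y)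
      (fun y hy => by rw [← norm_iteratedFDeriv_one]; exact hv y hy) m2 m1
  have hfirst : |v ε (u ε x) - v ε (u' ε x)| ≤ ε ^ l :=
    calc _ ≤ ε⁻¹ ^ p * ‖u ε x - u' ε x‖ := hmv
      _ ≤ ε⁻¹ ^ p * ε ^ (p + l) := by gcongr
      _ = ε ^ l := by rw [pow_add, inv_pow]; field_simp
  calc |v ε (u ε x) - v' ε (u' ε x)|
      ≤ |v ε (u ε x) - v ε (u' ε x)| + |v ε (u' ε x) - v' ε (u' ε x)| := abs_sub_le _ _ _
    _ ≤ ε ^ l + ε ^ l := add_le_add hfirst (hvd _ m2)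
    _ = 2 * ε ^ l := by ring
end
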